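/- Let x* be an optimal solution of the KP-LP (x* ∈ P_KP and ∑_i p_i x*_i ≥ ∑_i p_i x_i for all x ∈ P_KP), and suppose the color constraint is violated for some color c̃, i.e. ∑_{i : κ_i = c̃} x*_i − ∑_{i : κ_i ≠ c̃} x*_i > 1. Then there exists an optimal solution x' of the CKP-LP (x' ∈ P_CKP and ∑_i p_i x'_i ≥ ∑_i p_i x_i for all x ∈ P_CKP) for which the color constraint of c̃ is tight: ∑_{i : κ_i = c̃} x'_i − ∑_{i : κ_i ≠ c̃} x'_i = 1. -/

import Mathlib

/-!
The CKP-LP has an optimum `y`, by compactness. Either the constraint of the violated color is tight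
at `y`, or its gap there is below `1` while it exceeds `1` at `x*`, so that some point `z` of the
segment from `y` to `x*` has gap exactly `1`. By convexity `z` lies in the KP-LP region, and its
profit is at least that of `y` because the profit of `x*` is at least that of `y`. The other color
constraints hold at `z` automatically: for nonnegative vectors the gaps of two distinct colors
have sum at most `0` (`colorGap_add_colorGap_nonpos`), so all other gaps are at most `-1`.
-/

/-- The "color gap" of color `c` at `x`: `∑_{i : κ i = c} x i − ∑_{i : κ i ≠ c} x i`.
The color constraint of `c` is `colorGap n m κ x c ≤ 1`. -/
noncomputable def colorGap (n m : ℕ) (κ : Fin n → Fin m) (x : Fin n → ℝ) (c : Fin m) : ℝ :=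
  (∑ i ∈ Finset.univ.filter (fun i => κ i = c), x i)
    - ∑ i ∈ Finset.univ.filter (fun i => κ i ≠ c), x i

/-- Membership in the KP-LP region `P_KP = {x ∈ [0,1]^n : ∑ i, w i * x i ≤ b}`. -/
def kpFeas (n : ℕ) (w : Fin n → ℝ) (b : ℝ) (x : Fin n → ℝ) : Prop :=
  (∀ i, 0 ≤ x i ∧ x i ≤ 1) ∧ (∑ i, w i * x i) ≤ b

/-- Membership in the CKP-LP region `P_CKP`: `x ∈ P_KP` and every color constraint holds. -/
def ckpFeas (n m : ℕ) (κ : Fin n → Fin m) (w : Fin n → ℝ) (b : ℝ) (x : Fin n → ℝ) : Prop :=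
  kpFeas n w b x ∧ ∀ c : Fin m, colorGap n m κ x c ≤ 1

lemma colorGap_eq_sum_ite (n m : ℕ) (κ : Fin n → Fin m) (x : Fin n → ℝ) (c : Fin m) :
    colorGap n m κ x c = ∑ i, if κ i = c then x i else -x i := by
  rw [colorGap, Finset.sum_ite, Finset.sum_neg_distrib, sub_eq_add_neg]

/-- Every item counts negatively in the gap of at least one of two distinct colors. -/
lemma colorGap_add_colorGap_nonpos {n m : ℕ} {κ : Fin n → Fin m} {x : Fin n → ℝ}
    (hx : ∀ i, 0 ≤ x i) {c d : Fin m} (hcd : c ≠ d) :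
    colorGap n m κ x c + colorGap n m κ x d ≤ 0 := by
  rw [colorGap_eq_sum_ite, colorGap_eq_sum_ite, ← Finset.sum_add_distrib]
  refine Finset.sum_nonpos fun i _ => ?_
  have := hx i
  split_ifs with h1 h2
  · exact absurd (h1.symm.trans h2) hcd
  all_goals linarith

lemma colorGap_segment (n m : ℕ) (κ : Fin n → Fin m) (x y : Fin n → ℝ) (t : ℝ) (c : Fin m) :
    colorGap n m κ (fun i => (1 - t) * y i + t * x i) c =
      (1 - t) * colorGap n m κ y c + t * colorGap n m κ x c := by
  simp only [colorGap, Finset.sum_add_distrib, ← Finset.mul_sum]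
  ring

lemma sum_mul_segment {n : ℕ} (a x y : Fin n → ℝ) (t : ℝ) :
    ∑ i, a i * ((1 - t) * y i + t * x i) =
      (1 - t) * ∑ i, a i * y i + t * ∑ i, a i * x i := by
  rw [Finset.mul_sum, Finset.mul_sum, ← Finset.sum_add_distrib]
  exact Finset.sum_congr rfl fun i _ => by ring

lemma kpFeas_segment {n : ℕ} {w : Fin n → ℝ} {b : ℝ} {x y : Fin n → ℝ} {t : ℝ}
    (hx : kpFeas n w b x) (hy : kpFeas n w b y) (h0 : 0 ≤ t) (h1 : t ≤ 1) :
    kpFeas n w b (fun i => (1 - t) * y i + t * x i) := by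
  have h1' : 0 ≤ 1 - t := by linarith
  refine ⟨fun i => ⟨?_, ?_⟩, ?_⟩
  · have := mul_nonneg h1' (hy.1 i).1
    have := mul_nonneg h0 (hx.1 i).1
    linarith
  · have := mul_le_mul_of_nonneg_left (hy.1 i).2 h1'
    have := mul_le_mul_of_nonneg_left (hx.1 i).2 h0
    linarith
  · rw [sum_mul_segment]
    have := mul_le_mul_of_nonneg_left hy.2 h1'
    have := mul_le_mul_of_nonneg_left hx.2 h0
    linarith

/-- The CKP-LP attains its maximum: its region is compact and contains the origin. -/
lemma exists_ckp_optimum (n m : ℕ) (κ : Fin n → Fin m) (w p : Fin n → ℝ) (b : ℝ) (hb : 0 < b) :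
    ∃ y, ckpFeas n m κ w b y ∧
      ∀ x, ckpFeas n m κ w b x → (∑ i, p i * x i) ≤ ∑ i, p i * y i := by
  have hclosed : IsClosed {x : Fin n → ℝ | ckpFeas n m κ w b x} := by
    simp only [ckpFeas, kpFeas, colorGap, Set.ofPred_and, Set.ofPred_forall]
    refine ((isClosed_iInter fun i => ?_).inter ?_).inter (isClosed_iInter fun c => ?_)
    · exact (isClosed_le (by fun_prop) (by fun_prop)).inter
        (isClosed_le (by fun_prop) (by fun_prop))
    · exact isClosed_le (by fun_prop) (by fun_prop)
    · exact isClosed_le (by fun_prop) (by fun_prop)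
  have hcompact : IsCompact {x : Fin n → ℝ | ckpFeas n m κ w b x} :=
    (isCompact_Icc (a := (0 : Fin n → ℝ)) (b := 1)).of_isClosed_subset hclosed
      fun x hx => ⟨fun i => (hx.1.1 i).1, fun i => (hx.1.1 i).2⟩
  have hzero : ckpFeas n m κ w b (fun _ => 0) := by
    simp [ckpFeas, kpFeas, colorGap, hb.le]
  obtain ⟨y, hy, hmax⟩ := hcompact.exists_isMaxOn ⟨_, hzero⟩
    (f := fun x => ∑ i, p i * x i) (by fun_prop)
  exact ⟨y, hy, fun x hx => hmax hx⟩

/-- If `x*` is an optimal solution of the KP-LP whose color constraint is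
violated for some color `c̃`, then there exists an optimal solution `x'` of the CKP-LP for
which the color constraint of `c̃` is tight. -/
theorem kp_lp_violation_gives_tight_ckp_lp_optimum (n m : ℕ) (κ : Fin n → Fin m)
    (w p : Fin n → ℝ) (b : ℝ) (hw : ∀ i, 0 < w i) (hb : 0 < b) (ctilde : Fin m)
    (xstar : Fin n → ℝ) (hfeas : kpFeas n w b xstar)
    (hopt : ∀ x : Fin n → ℝ, kpFeas n w b x → (∑ i, p i * x i) ≤ ∑ i, p i * xstar i)
    (hviol : 1 < colorGap n m κ xstar ctilde) :
    ∃ x' : Fin n → ℝ, ckpFeas n m κ w b x' ∧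
      (∀ x : Fin n → ℝ, ckpFeas n m κ w b x → (∑ i, p i * x i) ≤ ∑ i, p i * x' i) ∧
      colorGap n m κ x' ctilde = 1 := by
  obtain ⟨y, hy, hymax⟩ := exists_ckp_optimum n m κ w p b hb
  have hgy : colorGap n m κ y ctilde ≤ 1 := hy.2 ctilde
  set g := colorGap n m κ y ctilde with hg
  set G := colorGap n m κ xstar ctilde with hG
  have hden : 0 < G - g := by linarith
  -- The `t` solving `(1 - t) * g + t * G = 1`; it vanishes when `y` is already tight.
  obtain ⟨t, ht⟩ : ∃ t : ℝ, t * (G - g) = 1 - g :=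
    ⟨(1 - g) / (G - g), div_mul_cancel₀ _ hden.ne'⟩
  have ht0 : 0 ≤ t := nonneg_of_mul_nonneg_left (by linarith) hden
  have ht1 : t ≤ 1 := le_of_mul_le_mul_right (by linarith) hden
  have hz := kpFeas_segment hfeas hy.1 ht0 ht1
  have htight : colorGap n m κ (fun i => (1 - t) * y i + t * xstar i) ctilde = 1 := by
    rw [colorGap_segment, ← hg, ← hG]
    linarith
  refine ⟨_, ⟨hz, fun c => ?_⟩, fun x hx => ?_, htight⟩
  · by_cases hc : c = ctilde
    · rw [hc, htight]
    · have := colorGap_add_colorGap_nonpos (κ := κ) (fun i => (hz.1 i).1) hc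
      linarith
  · refine (hymax x hx).trans ?_
    rw [sum_mul_segment]
    have := mul_le_mul_of_nonneg_left (hopt y hy.1) ht0
    linarith
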